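/- Let (R,m) be a Noetherian local ring of dimension d≥1, I_1,…,I_s m-primary ideals of R, and F = {F(n)}_{n∈ℤ^s} an I-admissible filtration of ideals in R. Then: (1) e_α(F) = e_α({I^n}) for all α∈ℕ^s with |α| = d; (2) Δ^d(P_F(n)) = Δ^d(P_{{I^n}}(n)) = e_0(I_1⋯I_s) for all n∈ℤ^s; (3) if J ⊆ F(e) is an ideal such that JF(n) = F(n+e) for all sufficiently large n∈ℕ^s (such a J is m-primary), then Δ^d(P_F(n)) = e_0(J) = e_0(I_1⋯I_s). -/

import Mathlib

/-! Common definitions for multigraded filtrations of ideals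
(following Sarkar–Verma, "Postulation and reduction vectors of
multigraded filtrations of ideals"). -/

open Finset IsLocalRing

/-- The vector `e = (1,…,1) ∈ ℤˢ`. -/
def evec (s : ℕ) : Fin s → ℤ := fun _ => 1

/-- `n⁺`, the componentwise positive part of a vector. -/
def vplus {s : ℕ} (n : Fin s → ℤ) : Fin s → ℤ := fun i => max (n i) 0

/-- `I^n = I₁^{n₁} ⋯ I_s^{n_s}` with the convention `I_i^{n_i} = R` for `n_i ≤ 0`. -/
def prodPow {R : Type*} [CommRing R] {s : ℕ} (I : Fin s → Ideal R) (n : Fin s → ℤ) : Ideal R :=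
  ∏ i, I i ^ (n i).toNat

/-- An ideal is `m`-primary iff it is proper and contains a power of the maximal ideal. -/
def IsMPrimary (R : Type*) [CommRing R] [IsLocalRing R] (I : Ideal R) : Prop :=
  I ≠ ⊤ ∧ maximalIdeal R ≤ I.radical

/-- A Cohen–Macaulay local ring: some system of parameters (a regular sequence of
length equal to the Krull dimension inside the maximal ideal) exists. -/
def IsCMLocal (R : Type*) [CommRing R] [IsLocalRing R] : Prop :=
  ∃ rs : List R, (∀ x ∈ rs, x ∈ maximalIdeal R) ∧ RingTheory.Sequence.IsRegular R rs ∧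
    (rs.length : WithBot ℕ∞) = ringKrullDim R

/-- A `ℤˢ`-graded `I`-admissible filtration of ideals.  Admissibility (finiteness of the
extended Rees ring `R'(F)` as a module over `R'(I)`) is recorded through the equivalent
condition that `F(n + m) = I^n F(m)` for all `n ≥ 0`, for a suitable fixed `m ≥ 0`. -/
structure AdmissibleFiltration (R : Type*) [CommRing R] (s : ℕ) (I : Fin s → Ideal R) where
  F : (Fin s → ℤ) → Ideal R
  prodPow_le : ∀ n, prodPow I n ≤ F n
  mul_le : ∀ m n, F m * F n ≤ F (m + n)
  antitone : ∀ m n : Fin s → ℤ, m ≤ n → F n ≤ F m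
  plus_eq : ∀ n, F n = F (vplus n)
  admissible : ∃ m : Fin s → ℤ, 0 ≤ m ∧
    ∀ n : Fin s → ℤ, 0 ≤ n → F (n + m) = prodPow I n * F m

/-- The length `λ_R(M)` of a module, as an integer (the longest chain of submodules;
this is the usual length for modules of finite length). -/
noncomputable def lenI (R M : Type*) [CommRing R] [AddCommGroup M] [Module R M] : ℤ :=
  (((Order.krullDim (Submodule R M)).unbotD 0).toNat : ℤ)

/-- The Hilbert function `H_F(n) = λ(R/F(n))` of a filtration. -/
noncomputable def hilbFn {R : Type*} [CommRing R] {s : ℕ} {I : Fin s → Ideal R}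
    (F : AdmissibleFiltration R s I) (n : Fin s → ℤ) : ℤ :=
  lenI R (R ⧸ F.F n)

/-- The multigraded Hilbert polynomial with coefficient data `c = (e_α)`:
`P(n) = Σ_{|α| ≤ d} (−1)^{d−|α|} e_α ∏ᵢ binom(nᵢ+αᵢ−1, αᵢ)`. -/
noncomputable def hilbPoly (s d : ℕ) (c : (Fin s → ℕ) → ℤ) (n : Fin s → ℤ) : ℤ :=
  ∑ α ∈ Finset.univ.filter (fun α : Fin s → Fin (d+1) => (∑ i, (α i : ℕ)) ≤ d),
    (-1)^(d - ∑ i, (α i : ℕ)) * c (fun i => (α i : ℕ)) *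
      ∏ i, Ring.choose (n i + ((α i : ℕ) : ℤ) - 1) (α i : ℕ)

/-- `c : (Fin s → ℕ) → ℤ` is the family of Hilbert coefficients of `F`:
the corresponding polynomial agrees with the Hilbert function for all large `n`. -/
noncomputable def IsHilbCoeffs {R : Type*} [CommRing R] {s : ℕ} {I : Fin s → Ideal R}
    (F : AdmissibleFiltration R s I) (d : ℕ) (c : (Fin s → ℕ) → ℤ) : Prop :=
  ∃ N : ℕ, ∀ n : Fin s → ℤ, (∀ i, (N : ℤ) ≤ n i) → hilbPoly s d c n = hilbFn F n

/-- The Samuel polynomial `P_a(n) = Σ_{i=0}^{d} (−1)^i e_i binom(n+d−1−i, d−i)` with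
coefficient data `c = (e_i)`. -/
noncomputable def samuelPoly (d : ℕ) (c : ℕ → ℤ) (n : ℤ) : ℤ :=
  ∑ i ∈ Finset.range (d + 1), (-1)^i * c i * Ring.choose (n + (d : ℤ) - 1 - (i : ℤ)) (d - i)

/-- `c` is the family of Hilbert coefficients of the `m`-primary ideal `a`. -/
noncomputable def IsSamuelCoeffs {R : Type*} [CommRing R] (a : Ideal R) (d : ℕ)
    (c : ℕ → ℤ) : Prop :=
  ∃ N : ℕ, ∀ n : ℕ, N ≤ n → samuelPoly d c (n : ℤ) = lenI R (R ⧸ a ^ n)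

section Reductions

variable {R : Type*} [CommRing R] {s d : ℕ} {I : Fin s → Ideal R}

/-- The ideal `J = (y₁,…,y_d)` of a complete reduction datum, where `y_j = x_{1j}⋯x_{sj}`. -/
def crIdeal (x : Fin s → Fin d → R) : Ideal R :=
  Ideal.span (Set.range fun j => ∏ i, x i j)

/-- `A = {x_{ij} ∈ I_i}` is a complete reduction of `F`: `J·F(n) = F(n+e)` for all large `n`. -/
def IsCompleteReduction (F : AdmissibleFiltration R s I) (x : Fin s → Fin d → R) : Prop :=
  (∀ i j, x i j ∈ I i) ∧
  ∃ N : ℕ, ∀ n : Fin s → ℤ, (∀ i, (N : ℤ) ≤ n i) →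
    crIdeal x * F.F n = F.F (n + evec s)

/-- A good complete reduction: in addition `F(m) ∩ (y₁) = y₁ F(m−e)` for all large `m`. -/
def IsGoodCompleteReduction (F : AdmissibleFiltration R s I) (x : Fin s → Fin d → R) : Prop :=
  IsCompleteReduction F x ∧
  ∀ h : 0 < d, ∃ N : ℕ, ∀ m : Fin s → ℤ, (∀ i, (N : ℤ) ≤ m i) →
    F.F m ⊓ Ideal.span {∏ i, x i ⟨0, h⟩} =
      Ideal.span {∏ i, x i ⟨0, h⟩} * F.F (m - evec s)

end Reductions

/-- The first difference operator `Δ¹ f (n) = f(n+e) − f(n)`; `Δ^k` is its `k`-th iterate. -/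
def deltaOp {s : ℕ} (f : (Fin s → ℤ) → ℤ) : (Fin s → ℤ) → ℤ :=
  fun n => f (n + evec s) - f n

/-- The Ratliff–Rush closure filtration `F̆(n) = ⋃_{k ≥ 1} (F(n+ke) : F(e)^k)`. -/
def ratliffRush {R : Type*} [CommRing R] {s : ℕ} {I : Fin s → Ideal R}
    (F : AdmissibleFiltration R s I) (n : Fin s → ℤ) : Ideal R :=
  ⨆ k : ℕ, (F.F (n + ((k + 1) : ℕ) • evec s)).colon (F.F (evec s) ^ (k + 1) : Ideal R)

/-- Vanishing of `H¹_{R₊₊}(R(F))_n` for all `n ∈ ℕˢ`.  By Proposition 4.1 of the paper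
(see STATEMENT 9), the degree-`n` component of this local cohomology module is isomorphic
to `F̆(n)/F(n)`, so its vanishing for all `n ≥ 0` is the statement that the Ratliff–Rush
closure filtration agrees with `F` in all nonnegative degrees. -/
def H1ReesVanishes {R : Type*} [CommRing R] {s : ℕ} {I : Fin s → Ideal R}
    (F : AdmissibleFiltration R s I) : Prop :=
  ∀ n : Fin s → ℤ, 0 ≤ n → ratliffRush F n = F.F n

/-!
Along a ray `k ↦ n + k v` the Hilbert polynomial is a polynomial in `k` whose coefficient of
degree `d` is the value at `v` of the form `∑_{|α| = d} e_α X^α / α!`; for positive `v` this value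
is therefore the limit of `λ(R/F(n + k v)) / k^d`, whatever `n` is.  Admissibility gives
`F(m + k v) ⊆ I^{k v} ⊆ F(k v)`, so the limits for `F` and `{Iⁿ}` agree, and a form is determined by
its values at positive integer vectors.  The same squeeze applies to `J^k`, since
`F(m + k e) = J^k F(m) ⊆ J^k ⊆ F(k e)`.  Finally `Δ^d` multiplies the coefficient of degree `d` in
the direction `e` by `d!`.
-/

open Filter Topology Polynomial

section Polynomials

variable {K ι M : Type*}

lemma coeff_prod_sum_of_natDegree_le [CommSemiring K] (S : Finset ι) {f : ι → K[X]} {n : ι → ℕ}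
    (hf : ∀ i ∈ S, (f i).natDegree ≤ n i) :
    (∏ i ∈ S, f i).coeff (∑ i ∈ S, n i) = ∏ i ∈ S, (f i).coeff (n i) := by
  classical
  induction S using Finset.induction_on with
  | empty => simp
  | insert i S hi ih =>
    obtain ⟨hfi, hfS⟩ := (Finset.forall_mem_insert ..).1 hf
    rw [prod_insert hi, prod_insert hi, sum_insert hi, ← ih hfS]
    exact coeff_mul_add_eq_of_natDegree_le hfi
      ((natDegree_prod_le _ _).trans (sum_le_sum hfS))

lemma natDegree_comp_linear_le [Semiring K] (p : K[X]) (a b : K) :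
    (p.comp (C a * X + C b)).natDegree ≤ p.natDegree :=
  natDegree_comp_le.trans ((Nat.mul_le_mul_left _ natDegree_linear_le).trans_eq (mul_one _))

lemma coeff_comp_linear_of_natDegree_le [CommSemiring K] {p : K[X]} {n : ℕ} (hp : p.natDegree ≤ n)
    (a b : K) : (p.comp (C a * X + C b)).coeff n = p.coeff n * a ^ n := by
  have hcomp : p.comp (C a * X + C b) = (taylor b p).comp (C a * X) := by
    simp [taylor_apply, comp_assoc]
  rw [hcomp, comp_C_mul_X_coeff]
  congr 1
  obtain rfl | hlt := hp.eq_or_lt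
  · exact coeff_taylor_natDegree ..
  · rw [coeff_eq_zero_of_natDegree_lt hlt,
      coeff_eq_zero_of_natDegree_lt ((natDegree_taylor p b).trans_lt hlt)]

lemma tendsto_eval_div_pow_atTop [NormedField K] [LinearOrder K] [IsStrictOrderedRing K]
    [OrderTopology K] {p : K[X]} {d : ℕ} (hp : p.natDegree ≤ d) :
    Tendsto (fun x ↦ p.eval x / x ^ d) atTop (𝓝 (p.coeff d)) := by
  have hXd : ∀ x : K, x ^ d = (X ^ d : K[X]).eval x := fun x ↦ by simp
  simp only [hXd]
  obtain hlt | heq := (natDegree_le_iff_degree_le.1 hp).lt_or_eq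
  · rw [coeff_eq_zero_of_degree_lt hlt]
    exact div_tendsto_atTop_zero_of_degree_lt _ _ (by rwa [degree_X_pow])
  · have hlead : p.coeff d = p.leadingCoeff / (X ^ d : K[X]).leadingCoeff := by
      rw [leadingCoeff_X_pow, div_one, leadingCoeff, natDegree_eq_of_degree_eq_some heq]
    rw [hlead]
    exact div_tendsto_atTop_leadingCoeff_div_of_degree_eq _ _ (by rw [heq, degree_X_pow])

lemma iterate_fwdDiff_of_natDegree_le [CommRing K] {p : K[X]} {d : ℕ} (hp : p.natDegree ≤ d)
    (x : K) : (fwdDiff 1)^[d] p.eval x = p.coeff d * d.factorial := by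
  obtain rfl | hlt := hp.eq_or_lt
  · simp [fwdDiff_iter_degree_eq_factorial]
  · simp [fwdDiff_iter_eq_zero_of_degree_lt hlt, coeff_eq_zero_of_natDegree_lt hlt]

lemma iterate_fwdDiff_eq_of_eval_eq [CommRing K] [AddCommMonoid M] {p : K[X]} {d : ℕ}
    (hp : p.natDegree ≤ d) {f : M → ℤ} {h n : M} (hf : ∀ k : ℕ, p.eval (k : K) = f (n + k • h)) :
    (((fwdDiff h)^[d] f n : ℤ) : K) = p.coeff d * d.factorial := by
  rw [← iterate_fwdDiff_of_natDegree_le hp 0, fwdDiff_iter_eq_sum_shift,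
    fwdDiff_iter_eq_sum_shift]
  simp [hf]

lemma eq_of_eval_pos_intCast_eq [CommRing K] [IsDomain K] [CharZero K] {p q : MvPolynomial ι K}
    (h : ∀ v : ι → ℤ, (∀ i, 0 < v i) →
      MvPolynomial.eval (fun i ↦ (v i : K)) p = MvPolynomial.eval (fun i ↦ (v i : K)) q) :
    p = q := by
  refine MvPolynomial.funext_set (fun _ ↦ ((↑) : ℤ → K) '' Set.Ioi 0)
    (fun _ ↦ (Set.Ioi_infinite 0).image Int.cast_injective.injOn) fun x hx ↦ ?_
  choose v hv hvx using fun i ↦ hx i trivial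
  obtain rfl : (fun i ↦ (v i : K)) = x := funext hvx
  exact h v hv

end Polynomials

section HilbertPolynomials

/-- The polynomial `X (X + 1) ⋯ (X + a - 1) / a!`, whose value at `n` is the binomial coefficient
`binom(n + a - 1, a)` occurring in Hilbert polynomials. -/
noncomputable def multichoosePoly (a : ℕ) : ℚ[X] :=
  C (a.factorial : ℚ)⁻¹ * ascPochhammer ℚ a

lemma eval_multichoosePoly (a : ℕ) (n : ℤ) :
    (multichoosePoly a).eval (n : ℚ) = Ring.choose (n + (a : ℤ) - 1) a := by
  have hcast : ((Ring.multichoose n a : ℤ) : ℚ) = Ring.multichoose (n : ℚ) a :=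
    Ring.map_multichoose (Int.castRingHom ℚ) n a
  have hfac := Ring.factorial_nsmul_multichoose_eq_ascPochhammer (n : ℚ) a
  rw [ascPochhammer_smeval_eq_eval, nsmul_eq_mul] at hfac
  rw [← Ring.multichoose_eq, hcast, multichoosePoly, eval_mul, eval_C, ← hfac,
    inv_mul_cancel_left₀ (by positivity)]

lemma natDegree_multichoosePoly_le (a : ℕ) : (multichoosePoly a).natDegree ≤ a :=
  (natDegree_C_mul_le _ _).trans (ascPochhammer_natDegree ℚ a).le

lemma coeff_multichoosePoly (a : ℕ) : (multichoosePoly a).coeff a = (a.factorial : ℚ)⁻¹ := by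
  have hmonic : (ascPochhammer ℚ a).coeff a = 1 := by
    simpa [Monic, leadingCoeff, ascPochhammer_natDegree] using monic_ascPochhammer ℚ a
  rw [multichoosePoly, coeff_C_mul, hmonic, mul_one]

/-- The Samuel polynomial `samuelPoly d b` as an element of `ℚ[X]`. -/
noncomputable def samuelPolynomial (d : ℕ) (b : ℕ → ℤ) : ℚ[X] :=
  ∑ i ∈ range (d + 1), C ((-1) ^ i * (b i : ℚ)) * multichoosePoly (d - i)

lemma eval_samuelPolynomial (d : ℕ) (b : ℕ → ℤ) (n : ℤ) :
    (samuelPolynomial d b).eval (n : ℚ) = samuelPoly d b n := by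
  simp only [samuelPolynomial, samuelPoly, eval_finsetSum, eval_mul, eval_C, eval_multichoosePoly]
  push_cast
  refine sum_congr rfl fun i hi ↦ ?_
  rw [Nat.cast_sub (mem_range_succ_iff.1 hi), ← add_sub_assoc, sub_right_comm]

lemma natDegree_samuelPolynomial_le (d : ℕ) (b : ℕ → ℤ) : (samuelPolynomial d b).natDegree ≤ d :=
  natDegree_sum_le_of_forall_le _ _ fun i _ ↦ (natDegree_C_mul_le _ _).trans
    ((natDegree_multichoosePoly_le _).trans (Nat.sub_le d i))

lemma coeff_samuelPolynomial (d : ℕ) (b : ℕ → ℤ) :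
    (samuelPolynomial d b).coeff d = b 0 / d.factorial := by
  have hlower : ∀ i ∈ range (d + 1), i ≠ 0 →
      (C ((-1) ^ i * (b i : ℚ)) * multichoosePoly (d - i)).coeff d = 0 := by
    intro i hi hi0
    have hlt : d - i < d := by have := mem_range.1 hi; omega
    rw [coeff_C_mul,
      coeff_eq_zero_of_natDegree_lt ((natDegree_multichoosePoly_le _).trans_lt hlt), mul_zero]
  rw [samuelPolynomial, finsetSum_coeff, sum_eq_single_of_mem 0 (by simp) hlower]
  simp [coeff_multichoosePoly, div_eq_mul_inv]

variable {s d : ℕ}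

lemma sum_filter_fin_eq_sum_finsuppAntidiag {ι A : Type*} [Fintype ι] [DecidableEq ι]
    [AddCommMonoid A] (d : ℕ) (g : (ι → ℕ) → A) :
    ∑ α : ι → Fin (d + 1) with ∑ i, (α i : ℕ) = d, g (fun i ↦ α i) =
      ∑ α ∈ finsuppAntidiag univ d, g α := by
  refine sum_bij (fun α _ ↦ Finsupp.equivFunOnFinite.symm fun i ↦ (α i : ℕ)) ?_ ?_ ?_ ?_
  · intro α hα
    simpa [mem_finsuppAntidiag] using hα
  · intro α _ β _ h
    exact funext fun i ↦ Fin.ext (DFunLike.congr_fun h i)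
  · intro β hβ
    have hsum : ∑ i, β i = d := by simpa [mem_finsuppAntidiag] using hβ
    have hle : ∀ i, β i ≤ d := fun i ↦
      hsum ▸ single_le_sum (fun _ _ ↦ Nat.zero_le _) (mem_univ i)
    exact ⟨fun i ↦ ⟨β i, Nat.lt_succ_of_le (hle i)⟩, by simpa using hsum, by ext; simp⟩
  · intro α _
    rfl

/-- The leading form `∑_{|α| = d} e_α X^α / α!` of the multigraded Hilbert polynomial with
coefficients `c = (e_α)`. -/
noncomputable def leadingForm (d : ℕ) (c : (Fin s → ℕ) → ℤ) : MvPolynomial (Fin s) ℚ :=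
  ∑ α ∈ finsuppAntidiag univ d,
    MvPolynomial.monomial α ((c α : ℚ) * ∏ i, ((α i).factorial : ℚ)⁻¹)

lemma coeff_leadingForm (c : (Fin s → ℕ) → ℤ) {α : Fin s →₀ ℕ} (hα : ∑ i, α i = d) :
    (leadingForm d c).coeff α = (c α : ℚ) * ∏ i, ((α i).factorial : ℚ)⁻¹ := by
  have hmem : α ∈ finsuppAntidiag univ d := by simpa [mem_finsuppAntidiag] using hα
  simp only [leadingForm, MvPolynomial.coeff_sum, MvPolynomial.coeff_monomial]
  rw [sum_ite_eq' _ α, if_pos hmem]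

lemma eq_of_leadingForm_eq {c c' : (Fin s → ℕ) → ℤ} (h : leadingForm d c = leadingForm d c')
    {α : Fin s → ℕ} (hα : ∑ i, α i = d) : c α = c' α := by
  have hcoeff := congrArg (MvPolynomial.coeff (Finsupp.equivFunOnFinite.symm α)) h
  rw [coeff_leadingForm c hα, coeff_leadingForm c' hα] at hcoeff
  have hfac : ∏ i, ((α i).factorial : ℚ)⁻¹ ≠ 0 :=
    prod_ne_zero_iff.2 fun i _ ↦ inv_ne_zero (Nat.cast_ne_zero.2 (α i).factorial_ne_zero)
  exact_mod_cast mul_right_cancel₀ hfac hcoeff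

lemma eval_leadingForm (c : (Fin s → ℕ) → ℤ) (v : Fin s → ℚ) :
    MvPolynomial.eval v (leadingForm d c) =
      ∑ α : Fin s → Fin (d + 1) with ∑ i, (α i : ℕ) = d,
        (c (fun i ↦ α i) : ℚ) * ∏ i, (((α i : ℕ).factorial : ℚ)⁻¹ * v i ^ (α i : ℕ)) := by
  rw [sum_filter_fin_eq_sum_finsuppAntidiag d fun α ↦
    (c α : ℚ) * ∏ i, (((α i).factorial : ℚ)⁻¹ * v i ^ α i)]
  simp [leadingForm, MvPolynomial.eval_monomial, Finsupp.prod_fintype, prod_mul_distrib, mul_assoc]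

/-- The product of the binomial coefficients `binom(nᵢ + αᵢ - 1, αᵢ)` restricted to the ray
`k ↦ n + k v`, as a polynomial in `k`. -/
noncomputable def multichooseRay (α : Fin s → ℕ) (n v : Fin s → ℤ) : ℚ[X] :=
  ∏ i, (multichoosePoly (α i)).comp (C (v i : ℚ) * X + C (n i : ℚ))

lemma eval_multichooseRay (α : Fin s → ℕ) (n v : Fin s → ℤ) (k : ℕ) :
    (multichooseRay α n v).eval (k : ℚ) =
      ∏ i, ((Ring.choose ((n + k • v) i + (α i : ℤ) - 1) (α i) : ℤ) : ℚ) := by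
  rw [multichooseRay, eval_prod]
  refine prod_congr rfl fun i _ ↦ ?_
  have hpoint : (C (v i : ℚ) * X + C (n i : ℚ)).eval (k : ℚ) = (((n + k • v) i : ℤ) : ℚ) := by
    simp [mul_comm, add_comm]
  rw [eval_comp, hpoint, eval_multichoosePoly]

lemma natDegree_multichoosePoly_comp_le (a : ℕ) (x y : ℚ) :
    ((multichoosePoly a).comp (C x * X + C y)).natDegree ≤ a :=
  (natDegree_comp_linear_le _ _ _).trans (natDegree_multichoosePoly_le a)

lemma natDegree_multichooseRay_le (α : Fin s → ℕ) (n v : Fin s → ℤ) :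
    (multichooseRay α n v).natDegree ≤ ∑ i, α i :=
  (natDegree_prod_le _ _).trans
    (sum_le_sum fun _ _ ↦ natDegree_multichoosePoly_comp_le _ _ _)

lemma coeff_multichooseRay (α : Fin s → ℕ) (n v : Fin s → ℤ) :
    (multichooseRay α n v).coeff (∑ i, α i) =
      ∏ i, (((α i).factorial : ℚ)⁻¹ * (v i : ℚ) ^ α i) := by
  rw [multichooseRay,
    coeff_prod_sum_of_natDegree_le _ fun _ _ ↦ natDegree_multichoosePoly_comp_le _ _ _]
  simp only [coeff_comp_linear_of_natDegree_le (natDegree_multichoosePoly_le _),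
    coeff_multichoosePoly]

/-- The Hilbert polynomial `hilbPoly s d c` restricted to the ray `k ↦ n + k v`, as a polynomial
in `k`. -/
noncomputable def hilbPolyRay (d : ℕ) (c : (Fin s → ℕ) → ℤ) (n v : Fin s → ℤ) : ℚ[X] :=
  ∑ α : Fin s → Fin (d + 1) with ∑ i, (α i : ℕ) ≤ d,
    C ((-1) ^ (d - ∑ i, (α i : ℕ)) * (c (fun i ↦ α i) : ℚ)) *
      multichooseRay (fun i ↦ α i) n v

lemma eval_hilbPolyRay (c : (Fin s → ℕ) → ℤ) (n v : Fin s → ℤ) (k : ℕ) :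
    (hilbPolyRay d c n v).eval (k : ℚ) = hilbPoly s d c (n + k • v) := by
  simp only [hilbPolyRay, hilbPoly, eval_finsetSum, eval_mul, eval_C, eval_multichooseRay]
  push_cast
  rfl

lemma natDegree_hilbPolyRay_le (c : (Fin s → ℕ) → ℤ) (n v : Fin s → ℤ) :
    (hilbPolyRay d c n v).natDegree ≤ d :=
  natDegree_sum_le_of_forall_le _ _ fun _ hα ↦ (natDegree_C_mul_le _ _).trans
    ((natDegree_multichooseRay_le _ _ _).trans (mem_filter.1 hα).2)

lemma coeff_hilbPolyRay (c : (Fin s → ℕ) → ℤ) (n v : Fin s → ℤ) :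
    (hilbPolyRay d c n v).coeff d =
      MvPolynomial.eval (fun i ↦ (v i : ℚ)) (leadingForm d c) := by
  rw [hilbPolyRay, finsetSum_coeff, eval_leadingForm]
  refine (sum_subset_zero_on_sdiff (monotone_filter_right _ fun _ _ h ↦ h.le) ?_ ?_).symm
  · intro α hα
    have hlt : ∑ i, (α i : ℕ) < d := by
      simp only [Finset.mem_sdiff, mem_filter, mem_univ, true_and] at hα
      exact lt_of_le_of_ne hα.1 hα.2
    rw [coeff_C_mul,
      coeff_eq_zero_of_natDegree_lt ((natDegree_multichooseRay_le _ _ _).trans_lt hlt), mul_zero]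
  · intro α hα
    have hcoeff := coeff_multichooseRay (fun i ↦ (α i : ℕ)) n v
    rw [(mem_filter.1 hα).2] at hcoeff
    rw [coeff_C_mul, hcoeff, (mem_filter.1 hα).2]
    simp

lemma iterate_deltaOp_hilbPoly (c : (Fin s → ℕ) → ℤ) (n : Fin s → ℤ) :
    ((deltaOp^[d] (hilbPoly s d c) n : ℤ) : ℚ) =
      MvPolynomial.eval (fun i ↦ (evec s i : ℚ)) (leadingForm d c) * d.factorial := by
  rw [← coeff_hilbPolyRay c n (evec s)]
  -- `deltaOp` is `fwdDiff (evec s)` by definition.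
  exact iterate_fwdDiff_eq_of_eval_eq (natDegree_hilbPolyRay_le c n _)
    (eval_hilbPolyRay c n (evec s))

lemma iterate_deltaOp_hilbPoly_eq_of_leadingForm_eq {c c' : (Fin s → ℕ) → ℤ}
    (h : leadingForm d c = leadingForm d c') :
    deltaOp^[d] (hilbPoly s d c) = deltaOp^[d] (hilbPoly s d c') := by
  ext n
  apply Int.cast_injective (α := ℚ)
  rw [iterate_deltaOp_hilbPoly, iterate_deltaOp_hilbPoly, h]

lemma tendsto_div_pow_of_eventually_eval_eq {p : ℚ[X]} (hp : p.natDegree ≤ d) {f : ℕ → ℤ}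
    (hf : ∀ᶠ k : ℕ in atTop, p.eval (k : ℚ) = f k) :
    Tendsto (fun k ↦ (f k : ℚ) / (k : ℚ) ^ d) atTop (𝓝 (p.coeff d)) :=
  ((tendsto_eval_div_pow_atTop hp).comp tendsto_natCast_atTop_atTop).congr' <|
    hf.mono fun k hk ↦ by rw [Function.comp_apply, hk]

lemma eventually_add_nsmul_of_forall_le {ι : Type*} [Finite ι] {P : (ι → ℤ) → Prop}
    (hP : ∃ N : ℕ, ∀ n : ι → ℤ, (∀ i, (N : ℤ) ≤ n i) → P n) (n : ι → ℤ) {v : ι → ℤ}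
    (hv : ∀ i, 0 < v i) : ∀ᶠ k : ℕ in atTop, P (n + k • v) := by
  obtain ⟨N, hN⟩ := hP
  have hlarge : ∀ i, ∀ᶠ k : ℕ in atTop, (N : ℤ) ≤ n i + k • v i := fun i ↦
    (tendsto_atTop_add_const_left _ _
      (tendsto_id.atTop_nsmul_const (hv i))).eventually_ge_atTop _
  exact (eventually_all.2 hlarge).mono fun k hk ↦ hN _ hk

lemma tendsto_div_pow_of_hilbPoly_eq {c : (Fin s → ℕ) → ℤ} {H : (Fin s → ℤ) → ℤ}
    (hc : ∃ N : ℕ, ∀ n : Fin s → ℤ, (∀ i, (N : ℤ) ≤ n i) → hilbPoly s d c n = H n)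
    (n : Fin s → ℤ) {v : Fin s → ℤ} (hv : ∀ i, 0 < v i) :
    Tendsto (fun k : ℕ ↦ (H (n + k • v) : ℚ) / (k : ℚ) ^ d) atTop
      (𝓝 (MvPolynomial.eval (fun i ↦ (v i : ℚ)) (leadingForm d c))) := by
  rw [← coeff_hilbPolyRay c n v]
  refine tendsto_div_pow_of_eventually_eval_eq (natDegree_hilbPolyRay_le c n v) ?_
  filter_upwards [eventually_add_nsmul_of_forall_le hc n hv] with k hk
  rw [eval_hilbPolyRay, hk]

lemma IsSamuelCoeffs.tendsto_div_pow {R : Type*} [CommRing R] {a : Ideal R} {b : ℕ → ℤ}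
    (hb : IsSamuelCoeffs a d b) :
    Tendsto (fun k : ℕ ↦ (lenI R (R ⧸ a ^ k) : ℚ) / (k : ℚ) ^ d) atTop
      (𝓝 (b 0 / d.factorial)) := by
  rw [← coeff_samuelPolynomial]
  refine tendsto_div_pow_of_eventually_eval_eq (natDegree_samuelPolynomial_le d b) ?_
  filter_upwards [eventually_atTop.2 hb] with k hk
  rw [← hk, ← eval_samuelPolynomial, Int.cast_natCast]

lemma IsSamuelCoeffs.iterate_deltaOp_hilbPoly_eq {R : Type*} [CommRing R] {a : Ideal R}
    {b : ℕ → ℤ} (hb : IsSamuelCoeffs a d b) {c : (Fin s → ℕ) → ℤ}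
    (hc : Tendsto (fun k : ℕ ↦ (lenI R (R ⧸ a ^ k) : ℚ) / (k : ℚ) ^ d) atTop
      (𝓝 (MvPolynomial.eval (fun i ↦ (evec s i : ℚ)) (leadingForm d c)))) (n : Fin s → ℤ) :
    deltaOp^[d] (hilbPoly s d c) n = b 0 := by
  apply Int.cast_injective (α := ℚ)
  rw [iterate_deltaOp_hilbPoly, tendsto_nhds_unique hc hb.tendsto_div_pow,
    div_mul_cancel₀ _ (Nat.cast_ne_zero.2 d.factorial_ne_zero)]

end HilbertPolynomials

section Lengths

variable {R : Type*} [CommRing R]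

lemma lenI_eq_toNat_length (R M : Type*) [CommRing R] [AddCommGroup M] [Module R M] :
    lenI R M = (Module.length R M).toNat := by
  rw [lenI, ← Module.coe_length, WithBot.unbotD_coe]

lemma isFiniteLength_quotient_of_le {A B : Ideal R} (hA : IsFiniteLength R (R ⧸ A)) (h : A ≤ B) :
    IsFiniteLength R (R ⧸ B) :=
  hA.of_surjective (Submodule.factor_surjective h)

lemma lenI_quotient_le_of_le {A B : Ideal R} (hA : IsFiniteLength R (R ⧸ A)) (h : A ≤ B) :
    lenI R (R ⧸ B) ≤ lenI R (R ⧸ A) := by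
  rw [lenI_eq_toNat_length, lenI_eq_toNat_length]
  exact_mod_cast ENat.toNat_le_toNat
    (Module.length_le_of_surjective _ (Submodule.factor_surjective h))
    (Module.length_ne_top_iff.2 hA)

lemma isFiniteLength_quotient_of_minimalPrimes_isMaximal [IsNoetherianRing R] {A : Ideal R}
    (hA : ∀ p ∈ A.minimalPrimes, p.IsMaximal) : IsFiniteLength R (R ⧸ A) := by
  have : Ring.KrullDimLE 0 (R ⧸ A) :=
    Ideal.krullDimLE_zero_quotient_iff_forall_minimalPrimes_isMaximal.2 hA
  have : IsArtinianRing (R ⧸ A) := IsNoetherianRing.isArtinianRing_of_krullDimLE_zero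
  exact isFiniteLength_iff_isNoetherian_isArtinian.2
    ⟨inferInstance, isArtinian_of_surjective_algebraMap (Ideal.Quotient.mk_surjective (I := A))⟩

lemma IsMPrimary.isMaximal_of_le [IsLocalRing R] {A p : Ideal R} (hA : IsMPrimary R A)
    (hp : p.IsPrime) (hAp : A ≤ p) : p.IsMaximal := by
  have hmp : maximalIdeal R ≤ p := hA.2.trans (hp.radical_le_iff.2 hAp)
  exact (maximalIdeal.isMaximal R).eq_of_le hp.ne_top hmp ▸ maximalIdeal.isMaximal R

lemma isFiniteLength_quotient_prodPow [IsLocalRing R] [IsNoetherianRing R] {s : ℕ}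
    {I : Fin s → Ideal R} (hI : ∀ i, IsMPrimary R (I i)) (n : Fin s → ℤ) :
    IsFiniteLength R (R ⧸ prodPow I n) := by
  refine isFiniteLength_quotient_of_minimalPrimes_isMaximal fun p hp ↦ ?_
  obtain ⟨i, -, hi⟩ := hp.1.1.prod_le.1 hp.1.2
  exact (hI i).isMaximal_of_le hp.1.1 (hp.1.1.le_of_pow_le hi)

end Lengths

section Filtrations

variable {R : Type*} [CommRing R] {s d : ℕ} {I : Fin s → Ideal R}

lemma prodPow_nsmul_evec (I : Fin s → Ideal R) (k : ℕ) :
    prodPow I (k • evec s) = (∏ i, I i) ^ k := by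
  simp [prodPow, evec, prod_pow]

namespace AdmissibleFiltration

variable (F : AdmissibleFiltration R s I)

lemma isFiniteLength_quotient (hI : ∀ n, IsFiniteLength R (R ⧸ prodPow I n)) (n : Fin s → ℤ) :
    IsFiniteLength R (R ⧸ F.F n) :=
  isFiniteLength_quotient_of_le (hI n) (F.prodPow_le n)

lemma exists_add_nsmul_le_prodPow :
    ∃ m, ∀ (k : ℕ) {v : Fin s → ℤ}, (∀ i, 0 < v i) → F.F (m + k • v) ≤ prodPow I (k • v) := by
  obtain ⟨m, -, hm⟩ := F.admissible
  refine ⟨m, fun k v hv ↦ ?_⟩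
  rw [add_comm, hm _ (nsmul_nonneg (fun i ↦ (hv i).le) k)]
  exact Ideal.mul_le_left

variable {F} {J : Ideal R} {m v : Fin s → ℤ}

lemma pow_le_nsmul (hJ : J ≤ F.F v) (k : ℕ) : J ^ k ≤ F.F (k • v) := by
  induction k with
  | zero => simpa [prodPow, Ideal.top_pow] using F.prodPow_le 0
  | succ k ih =>
    rw [pow_succ, succ_nsmul]
    exact (Ideal.mul_mono ih hJ).trans (F.mul_le _ _)

lemma add_nsmul_eq_pow_mul (hv : 0 ≤ v) (hJ : ∀ n, m ≤ n → J * F.F n = F.F (n + v)) (k : ℕ) :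
    F.F (m + k • v) = J ^ k * F.F m := by
  induction k with
  | zero => simp
  | succ k ih =>
    rw [succ_nsmul, ← add_assoc, ← hJ _ (le_add_of_nonneg_right (nsmul_nonneg hv k)), ih, pow_succ',
      mul_assoc]

end AdmissibleFiltration

lemma IsHilbCoeffs.tendsto_div_pow_of_le_of_le {F : AdmissibleFiltration R s I}
    {c : (Fin s → ℕ) → ℤ} (hc : IsHilbCoeffs F d c) (hF : ∀ n, IsFiniteLength R (R ⧸ F.F n))
    {m v : Fin s → ℤ} (hv : ∀ i, 0 < v i) {A : ℕ → Ideal R} (hlo : ∀ k, F.F (m + k • v) ≤ A k)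
    (hhi : ∀ k, A k ≤ F.F (k • v)) :
    Tendsto (fun k ↦ (lenI R (R ⧸ A k) : ℚ) / (k : ℚ) ^ d) atTop
      (𝓝 (MvPolynomial.eval (fun i ↦ (v i : ℚ)) (leadingForm d c))) := by
  have hA : ∀ k, IsFiniteLength R (R ⧸ A k) := fun k ↦
    isFiniteLength_quotient_of_le (hF _) (hlo k)
  refine tendsto_of_tendsto_of_tendsto_of_le_of_le (tendsto_div_pow_of_hilbPoly_eq hc 0 hv)
    (tendsto_div_pow_of_hilbPoly_eq hc m hv) (fun k ↦ ?_) fun k ↦ ?_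
  · rw [zero_add]
    gcongr
    exact lenI_quotient_le_of_le (hA k) (hhi k)
  · dsimp only
    gcongr
    exact lenI_quotient_le_of_le (hF _) (hlo k)

lemma IsHilbCoeffs.tendsto_div_pow_of_mul_eq {F : AdmissibleFiltration R s I}
    {c : (Fin s → ℕ) → ℤ} (hc : IsHilbCoeffs F d c) (hF : ∀ n, IsFiniteLength R (R ⧸ F.F n))
    {v : Fin s → ℤ} (hv : ∀ i, 0 < v i) {J : Ideal R} (hJv : J ≤ F.F v)
    (hJ : ∃ N : ℕ, ∀ n : Fin s → ℤ, (∀ i, (N : ℤ) ≤ n i) → J * F.F n = F.F (n + v)) :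
    Tendsto (fun k : ℕ ↦ (lenI R (R ⧸ J ^ k) : ℚ) / (k : ℚ) ^ d) atTop
      (𝓝 (MvPolynomial.eval (fun i ↦ (v i : ℚ)) (leadingForm d c))) := by
  obtain ⟨N, hN⟩ := hJ
  refine hc.tendsto_div_pow_of_le_of_le hF hv (m := fun _ ↦ N) (fun k ↦ ?_)
    (AdmissibleFiltration.pow_le_nsmul hJv)
  rw [AdmissibleFiltration.add_nsmul_eq_pow_mul (fun i ↦ (hv i).le) (fun n hn ↦ hN n hn) k]
  exact Ideal.mul_le_left

end Filtrations

theorem hilbert_coeff_top_degree_and_delta_general {R : Type*} [CommRing R] {d s : ℕ}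
    {I : Fin s → Ideal R} (hI : ∀ n, IsFiniteLength R (R ⧸ prodPow I n))
    {F : AdmissibleFiltration R s I} {c : (Fin s → ℕ) → ℤ} (hc : IsHilbCoeffs F d c)
    {c' : (Fin s → ℕ) → ℤ}
    (hc' : ∃ N : ℕ, ∀ n : Fin s → ℤ, (∀ i, (N : ℤ) ≤ n i) →
      hilbPoly s d c' n = lenI R (R ⧸ prodPow I n))
    {b : ℕ → ℤ} (hb : IsSamuelCoeffs (∏ i, I i) d b) :
    (∀ α : Fin s → ℕ, (∑ i, α i) = d → c α = c' α)
    ∧ (∀ n : Fin s → ℤ,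
        deltaOp^[d] (hilbPoly s d c) n = deltaOp^[d] (hilbPoly s d c') n ∧
        deltaOp^[d] (hilbPoly s d c) n = b 0)
    ∧ (∀ J : Ideal R, J ≤ F.F (evec s) →
        (∃ N : ℕ, ∀ n : Fin s → ℤ, (∀ i, (N : ℤ) ≤ n i) → J * F.F n = F.F (n + evec s)) →
        ∀ bJ : ℕ → ℤ, IsSamuelCoeffs J d bJ →
          (∀ n : Fin s → ℤ, deltaOp^[d] (hilbPoly s d c) n = bJ 0) ∧ bJ 0 = b 0) := by
  have hF := F.isFiniteLength_quotient hI
  have he : ∀ i, 0 < evec s i := fun _ ↦ one_pos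
  obtain ⟨m, hm⟩ := F.exists_add_nsmul_le_prodPow
  have hlim (v : Fin s → ℤ) (hv : ∀ i, 0 < v i) :=
    hc.tendsto_div_pow_of_le_of_le hF hv (fun k ↦ hm k hv) fun k ↦ F.prodPow_le (k • v)
  have hform : leadingForm d c = leadingForm d c' := eq_of_eval_pos_intCast_eq fun v hv ↦
    tendsto_nhds_unique (hlim v hv) <|
      (tendsto_div_pow_of_hilbPoly_eq hc' 0 hv).congr fun k ↦ by rw [zero_add]
  have hΔ : ∀ n, deltaOp^[d] (hilbPoly s d c) n = b 0 := hb.iterate_deltaOp_hilbPoly_eq <|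
    (hlim (evec s) he).congr fun k ↦ by rw [prodPow_nsmul_evec]
  have hΔ' : deltaOp^[d] (hilbPoly s d c) = deltaOp^[d] (hilbPoly s d c') :=
    iterate_deltaOp_hilbPoly_eq_of_leadingForm_eq hform
  refine ⟨fun α ↦ eq_of_leadingForm_eq hform, fun n ↦ ⟨congrFun hΔ' n, hΔ n⟩, ?_⟩
  intro J hJe hJ bJ hbJ
  have hΔJ : ∀ n, deltaOp^[d] (hilbPoly s d c) n = bJ 0 :=
    hbJ.iterate_deltaOp_hilbPoly_eq (hc.tendsto_div_pow_of_mul_eq hF he hJe hJ)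
  exact ⟨hΔJ, (hΔJ 0).symm.trans (hΔ 0)⟩

/-- Let `(R,m)` be a Noetherian local ring of dimension `d ≥ 1`, `I₁,…,I_s`
`m`-primary ideals, and `F` an `I`-admissible filtration.  Let `c` be the Hilbert
coefficients of `F`, `c'` those of the filtration `{Iⁿ}`, and `b` the Hilbert coefficients
of the single ideal `I₁⋯I_s`.  Then:
(1) `e_α(F) = e_α({Iⁿ})` for all `α` with `|α| = d`;
(2) `Δ^d P_F(n) = Δ^d P_{{Iⁿ}}(n) = e₀(I₁⋯I_s)` for all `n`;
(3) if `J ⊆ F(e)` satisfies `J F(n) = F(n+e)` for all large `n` (such a `J` is `m`-primary,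
with Hilbert coefficients `bJ`), then `Δ^d P_F(n) = e₀(J) = e₀(I₁⋯I_s)`. -/
theorem hilbert_coeff_top_degree_and_delta
    (R : Type*) [CommRing R] [IsLocalRing R] [IsNoetherianRing R]
    (d s : ℕ) (hd : 1 ≤ d) (hdim : ringKrullDim R = d)
    (I : Fin s → Ideal R) (hI : ∀ i, IsMPrimary R (I i))
    (F : AdmissibleFiltration R s I)
    (c : (Fin s → ℕ) → ℤ) (hc : IsHilbCoeffs F d c)
    (c' : (Fin s → ℕ) → ℤ)
    (hc' : ∃ N : ℕ, ∀ n : Fin s → ℤ, (∀ i, (N : ℤ) ≤ n i) →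
      hilbPoly s d c' n = lenI R (R ⧸ prodPow I n))
    (b : ℕ → ℤ) (hb : IsSamuelCoeffs (∏ i, I i) d b) :
    (∀ α : Fin s → ℕ, (∑ i, α i) = d → c α = c' α)
    ∧ (∀ n : Fin s → ℤ,
        deltaOp^[d] (hilbPoly s d c) n = deltaOp^[d] (hilbPoly s d c') n ∧
        deltaOp^[d] (hilbPoly s d c) n = b 0)
    ∧ (∀ J : Ideal R, J ≤ F.F (evec s) →
        (∃ N : ℕ, ∀ n : Fin s → ℤ, (∀ i, (N : ℤ) ≤ n i) → J * F.F n = F.F (n + evec s)) →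
        ∀ bJ : ℕ → ℤ, IsSamuelCoeffs J d bJ →
          (∀ n : Fin s → ℤ, deltaOp^[d] (hilbPoly s d c) n = bJ 0) ∧ bJ 0 = b 0) :=
  hilbert_coeff_top_degree_and_delta_general (isFiniteLength_quotient_prodPow hI) hc hc' hb
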